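/- (Irreducible invariance) Let λ ∈ Λ_I⁺ and β ∈ Ψ_λ⁺. Then there exists μ ∈ Λ_I⁺ with sgn(s_βλ, μ) ≠ 0 if and only if there exists μ' ∈ Λ⁺(Φ_I ∩ Φ_{β,0}, Φ_{β,0}) with sgn(s_β(λ|_{Φ_{β,0}}), μ', Φ_I ∩ Φ_{β,0}, Φ_{β,0}) ≠ 0. In particular, if sgn(s_βλ, μ) ≠ 0, then μ' = μ|_{Φ_{β,0}} and c(λ,μ) = c(λ|_{Φ_{β,0}}, μ|_{Φ_{β,0}}, Φ_I ∩ Φ_{β,0}, Φ_{β,0}). -/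

import Mathlib

open scoped RealInnerProductSpace
open Classical

noncomputable section

namespace JantzenGVM

variable {V : Type*} [NormedAddCommGroup V] [InnerProductSpace ℝ V] [FiniteDimensional ℝ V]

/-- The coroot `α^∨ = 2α/⟨α,α⟩` of a vector `α` (junk value `0` when `α = 0`). -/
def coroot (α : V) : V := (2 / ⟪α, α⟫) • α

/-- The linear functional `v ↦ ⟨v, α^∨⟩`. -/
def corootForm (α : V) : V →ₗ[ℝ] ℝ where
  toFun v := ⟪v, coroot α⟫
  map_add' x y := by simp [inner_add_left]
  map_smul' c x := by simp [inner_smul_left]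

lemma corootForm_self {α : V} (h : ⟪α, α⟫ ≠ 0) : corootForm α α = 2 := by
  simp only [corootForm, coroot, LinearMap.coe_mk, AddHom.coe_mk, real_inner_smul_right]
  field_simp

/-- The reflection `s_α` as a linear automorphism of `V` (the identity when `⟨α,α⟩ = 0`). -/
def reflV (α : V) : V ≃ₗ[ℝ] V :=
  if h : ⟪α, α⟫ = 0 then LinearEquiv.refl ℝ V
  else Module.reflection (corootForm_self h)

/-- `h* = ℂ ⊗ V`, realized as the space of real-linear functionals `V → ℂ` via the
inner product; an element `λ` pairs with a root `α` by `⟨λ, α⟩ = λ α` and with the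
coroot by `⟨λ, α^∨⟩ = λ (coroot α)`. -/
abbrev HStar (V : Type*) [NormedAddCommGroup V] [InnerProductSpace ℝ V] := V →ₗ[ℝ] ℂ

/-- The canonical embedding of `V` into `h*`. -/
def emb (α : V) : HStar V where
  toFun v := (⟪α, v⟫ : ℂ)
  map_add' x y := by simp [inner_add_right]
  map_smul' c x := by simp [inner_smul_right, Complex.real_smul]

/-- The action of a linear automorphism `w` of `V` on `h*`: `(w • λ)(v) = λ(w⁻¹ v)`. -/
def wAct (w : V ≃ₗ[ℝ] V) (l : HStar V) : HStar V := l ∘ₗ (w.symm : V →ₗ[ℝ] V)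

/-- The reflection `s_β λ = λ - ⟨λ, β^∨⟩ β` acting on `h*`. -/
def sRefl (β : V) (l : HStar V) : HStar V := l - l (coroot β) • emb β

/-- The group generated by the reflections in the elements of `Φ'`. -/
def weyl (Φ' : Set V) : Subgroup (V ≃ₗ[ℝ] V) :=
  Subgroup.closure {w | ∃ α ∈ Φ', w = reflV α}

/-- A finite, reduced, crystallographic root system spanning the Euclidean space `V`,
together with a choice of positive system and the corresponding simple system. -/
structure RootSys (V : Type*) [NormedAddCommGroup V] [InnerProductSpace ℝ V]
    [FiniteDimensional ℝ V] where
  Φ : Finset V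
  pos : Finset V
  Δ : Finset V
  ne_zero : ∀ α ∈ Φ, α ≠ (0 : V)
  span_eq_top : Submodule.span ℝ (Φ : Set V) = ⊤
  reduced : ∀ α ∈ Φ, ∀ c : ℝ, c • α ∈ Φ → c = 1 ∨ c = -1
  refl_mem : ∀ α ∈ Φ, ∀ β ∈ Φ, reflV α β ∈ Φ
  crystallographic : ∀ α ∈ Φ, ∀ β ∈ Φ, ∃ n : ℤ, ⟪β, coroot α⟫ = (n : ℝ)
  pos_subset : pos ⊆ Φ
  mem_pos_or : ∀ α ∈ Φ, α ∈ pos ∨ -α ∈ pos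
  not_both : ∀ α ∈ pos, -α ∉ pos
  simple_subset : Δ ⊆ pos
  simple_indep : LinearIndependent ℝ (fun x : {a : V // a ∈ Δ} => x.1)
  simple_gen : ∀ β ∈ pos, ∃ c : V → ℝ, (∀ α ∈ Δ, 0 ≤ c α) ∧ β = ∑ α ∈ Δ, c α • α

/-- A subsystem of the root system: a subset of `Φ` closed under its own reflections. -/
def IsSubsystem (S : RootSys V) (Φ' : Set V) : Prop :=
  Φ' ⊆ (S.Φ : Set V) ∧ ∀ α ∈ Φ', ∀ β ∈ Φ', reflV α β ∈ Φ'

/-- The length of `w`, i.e. the number of positive roots sent to negative roots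
(this equals the Coxeter length for elements of the Weyl group). -/
def len (S : RootSys V) (w : V ≃ₗ[ℝ] V) : ℕ :=
  {β ∈ (S.pos : Set V) | w β ∉ (S.pos : Set V)}.ncard

/-- `Φ_I = ℤI ∩ Φ`, the subsystem generated by a subset `I` of the simple roots. -/
def PhiI (S : RootSys V) (I : Finset V) : Set V :=
  {α ∈ (S.Φ : Set V) | α ∈ Submodule.span ℤ (I : Set V)}

/-- `z` is a positive integer. -/
def IsPosInt (z : ℂ) : Prop := ∃ n : ℤ, 0 < n ∧ z = (n : ℂ)

/-- `z` is an integer. -/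
def IsInt (z : ℂ) : Prop := ∃ n : ℤ, z = (n : ℂ)

/-- `Λ_I⁺ = {λ ∈ h* : ⟨λ, α^∨⟩ ∈ ℤ_{>0} for all α ∈ I}`. -/
def LambdaP (I : Set V) : Set (HStar V) :=
  {l | ∀ α ∈ I, IsPosInt (l (coroot α))}

/-- `Λ⁺(Φ'', Φ') = {ν ∈ ℂΦ' : ⟨ν, α^∨⟩ ∈ ℤ_{>0} for all α ∈ Φ'' ∩ Φ⁺}`. -/
def LambdaPSub (S : RootSys V) (Φ'' Φ' : Set V) : Set (HStar V) :=
  {l | l ∈ Submodule.span ℂ (emb '' Φ') ∧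
       ∀ α ∈ Φ'' ∩ (S.pos : Set V), IsPosInt (l (coroot α))}

/-- `λ` is `Φ''`-regular: `⟨λ, α⟩ ≠ 0` for all `α ∈ Φ''`. -/
def IsRegularOn (Φ'' : Set V) (l : HStar V) : Prop := ∀ α ∈ Φ'', l α ≠ 0

/-- `Ψ⁺(λ, Φ'', Φ') = {β ∈ (Φ' ∩ Φ⁺) \ Φ'' : ⟨λ, β^∨⟩ ∈ ℤ_{>0}}`. -/
def PsiP (S : RootSys V) (Φ'' Φ' : Set V) (l : HStar V) : Set V :=
  {β | β ∈ Φ' ∩ (S.pos : Set V) ∧ β ∉ Φ'' ∧ IsPosInt (l (coroot β))}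

/-- `Ψ⁺⁺(λ, Φ'', Φ') = {β ∈ Ψ⁺(λ, Φ'', Φ') : s_β λ is Φ''-regular}`. -/
def PsiPP (S : RootSys V) (Φ'' Φ' : Set V) (l : HStar V) : Set V :=
  {β ∈ PsiP S Φ'' Φ' l | ∀ α ∈ Φ'', (sRefl β l) α ≠ 0}

/-- The sign function: `sgn(λ, μ) = (-1)^{ℓ(w)}` if `λ, μ` are `Φ''`-regular and
`μ = wλ` for some `w ∈ W(Φ'')`, and `0` otherwise. -/
def sgnW (S : RootSys V) (Φ'' : Set V) (l m : HStar V) : ℤ :=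
  if h : IsRegularOn Φ'' l ∧ IsRegularOn Φ'' m ∧ ∃ w, w ∈ weyl Φ'' ∧ m = wAct w l
  then (-1) ^ len S h.2.2.choose else 0

/-- The Jantzen coefficient `c(λ, μ, Φ'', Φ') = Σ_{β ∈ Ψ⁺⁺(λ,Φ'',Φ')} sgn(s_β λ, μ)`. -/
def jc (S : RootSys V) (Φ'' Φ' : Set V) (l m : HStar V) : ℤ :=
  ∑ᶠ β ∈ PsiPP S Φ'' Φ' l, sgnW S Φ'' (sRefl β l) m

/-- The symmetrized Jantzen coefficient `c̃(λ, μ, Φ'', Φ')`. -/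
def jcSym (S : RootSys V) (Φ'' Φ' : Set V) (l m : HStar V) : ℤ :=
  jc S Φ'' Φ' l m + jc S Φ'' Φ' m l

/-- `θ(λ) = Σ_{w ∈ W_I} (-1)^{ℓ(w)} e^{wλ}` in the free `ℤ`-module on `h*`. -/
def theta (S : RootSys V) (I : Finset V) (l : HStar V) : HStar V →₀ ℤ :=
  ∑ᶠ w ∈ (weyl (PhiI S I) : Set (V ≃ₗ[ℝ] V)),
    Finsupp.single (wAct w l) ((-1) ^ len S w)

/-- `Φ_λ = {α ∈ Φ : ⟨λ, α⟩ = 0}`. -/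
def singSet (S : RootSys V) (l : HStar V) : Set V :=
  {α ∈ (S.Φ : Set V) | l α = 0}

/-- `Φ_{[λ]} = {α ∈ Φ : ⟨λ, α^∨⟩ ∈ ℤ}`. -/
def integralSet (S : RootSys V) (l : HStar V) : Set V :=
  {α ∈ (S.Φ : Set V) | IsInt (l (coroot α))}

/-- `(ℚ A) ∩ Φ`, the intersection of the rational span of `A` with `Φ`.
Taking `A = Φ_I ∪ {β}` gives `Φ_{β,1}`; taking `A = Φ_λ ∪ {β}` gives `Φ_{β,2}`. -/
def ratSpanRoots (S : RootSys V) (A : Set V) : Set V :=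
  {γ ∈ (S.Φ : Set V) | ∃ (t : Finset V) (c : V → ℚ),
    (t : Set V) ⊆ A ∧ γ = ∑ α ∈ t, (c α : ℝ) • α}

/-- `Φ_{β,0}`, the irreducible component of `Φ` containing `β`. -/
def component (S : RootSys V) (β : V) : Set V :=
  {γ ∈ (S.Φ : Set V) |
    Relation.ReflTransGen
      (fun x y => x ∈ (S.Φ : Set V) ∧ y ∈ (S.Φ : Set V) ∧ ⟪x, y⟫ ≠ 0) β γ}

/-- `λ|_{Φ'}`: the unique element of `ℂΦ'` with `⟨λ|_{Φ'}, α^∨⟩ = ⟨λ, α^∨⟩`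
for all `α ∈ Φ'`. -/
def restrictW (Φ' : Set V) (l : HStar V) : HStar V :=
  letI : Nonempty (HStar V) := ⟨0⟩
  Classical.epsilon fun m =>
    m ∈ Submodule.span ℂ (emb '' Φ') ∧ ∀ α ∈ Φ', m (coroot α) = l (coroot α)

/-- `ᴵWᴶ = {w ∈ W : ℓ(uwv) = ℓ(u) + ℓ(w) + ℓ(v) for all u ∈ W_I, v ∈ W_J}`. -/
def doubleCoset (S : RootSys V) (I J : Finset V) : Set (V ≃ₗ[ℝ] V) :=
  {w | w ∈ weyl (S.Φ : Set V) ∧ ∀ u ∈ weyl (PhiI S I), ∀ v ∈ weyl (PhiI S J),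
    len S (u * w * v) = len S u + len S w + len S v}

/-- The fundamental weight `ϖ_j` relative to an enumeration `e` of the simple roots:
the unique element of `h*` with `⟨ϖ_j, α_k^∨⟩ = δ_{jk}`. -/
def fundWeight {n : ℕ} (e : Fin n → V) (j : Fin n) : HStar V :=
  letI : Nonempty (HStar V) := ⟨0⟩
  Classical.epsilon fun m => ∀ k : Fin n, m (coroot (e k)) = if k = j then 1 else 0

/-- The labels of the irreducible Dynkin types. -/
inductive LieType | A | B | C | D | E | F | G
deriving DecidableEq

/-- The Cartan matrix of type `A_n` (1-based indices): entry `(i,j)` is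
`⟨α_i, α_j^∨⟩`. -/
def cartanA (i j : ℕ) : ℤ :=
  if i = j then 2 else if i + 1 = j ∨ j + 1 = i then -1 else 0

/-- The Cartan matrices of the irreducible types in the standard (Bourbaki/Humphreys)
numbering of the Dynkin diagram: `cartanEntry t n i j = ⟨α_i, α_j^∨⟩` (1-based). -/
def cartanEntry : LieType → ℕ → ℕ → ℕ → ℤ
  | .A, _, i, j => cartanA i j
  | .B, n, i, j => if i + 1 = n ∧ j = n then -2 else cartanA i j
  | .C, n, i, j => if i = n ∧ j + 1 = n then -2 else cartanA i j
  | .D, n, i, j =>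
      if i = j then 2
      else if (i + 2 = n ∧ j = n) ∨ (i = n ∧ j + 2 = n) then -1
      else if (i + 1 = n ∧ j = n) ∨ (i = n ∧ j + 1 = n) then 0
      else cartanA i j
  | .E, _, i, j =>
      if i = j then 2
      else if (i = 1 ∧ j = 3) ∨ (i = 3 ∧ j = 1) ∨ (i = 2 ∧ j = 4) ∨ (i = 4 ∧ j = 2) then -1
      else if (i = 1 ∧ j = 2) ∨ (i = 2 ∧ j = 1) ∨ (i = 2 ∧ j = 3) ∨ (i = 3 ∧ j = 2) then 0
      else cartanA i j
  | .F, _, i, j => if i = 2 ∧ j = 3 then -2 else cartanA i j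
  | .G, _, i, j => if i = 2 ∧ j = 1 then -3 else cartanA i j

/-- The standard basis vector `e_k` (1-based index, junk `0` outside `1 ≤ k ≤ n`). -/
def stdE (n k : ℕ) : EuclideanSpace ℝ (Fin n) :=
  if h : 1 ≤ k ∧ k ≤ n then EuclideanSpace.single ⟨k - 1, by omega⟩ 1 else 0

/-- The labels `B`, `C`, `D` of the classical non-`A` types. -/
inductive BCD | B | C | D
deriving DecidableEq

/-- The root set of `B_n` / `C_n` / `D_n` in the standard realization. -/
def bcdRoots (t : BCD) (n : ℕ) : Set (EuclideanSpace ℝ (Fin n)) :=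
  {v | (∃ i j : ℕ, 1 ≤ i ∧ i < j ∧ j ≤ n ∧
          (v = stdE n i - stdE n j ∨ v = -(stdE n i - stdE n j) ∨
           v = stdE n i + stdE n j ∨ v = -(stdE n i + stdE n j))) ∨
       (match t with
        | .B => ∃ i : ℕ, 1 ≤ i ∧ i ≤ n ∧ (v = stdE n i ∨ v = -stdE n i)
        | .C => ∃ i : ℕ, 1 ≤ i ∧ i ≤ n ∧ (v = (2:ℝ) • stdE n i ∨ v = -((2:ℝ) • stdE n i))
        | .D => False)}

/-- The positive roots of `B_n` / `C_n` / `D_n` in the standard realization. -/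
def bcdPos (t : BCD) (n : ℕ) : Set (EuclideanSpace ℝ (Fin n)) :=
  {v | (∃ i j : ℕ, 1 ≤ i ∧ i < j ∧ j ≤ n ∧
          (v = stdE n i - stdE n j ∨ v = stdE n i + stdE n j)) ∨
       (match t with
        | .B => ∃ i : ℕ, 1 ≤ i ∧ i ≤ n ∧ v = stdE n i
        | .C => ∃ i : ℕ, 1 ≤ i ∧ i ≤ n ∧ v = (2:ℝ) • stdE n i
        | .D => False)}

/-- The simple roots of `B_n` / `C_n` / `D_n` in the standard realization. -/
def bcdSimple (t : BCD) (n : ℕ) : Set (EuclideanSpace ℝ (Fin n)) :=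
  {v | (∃ i : ℕ, 1 ≤ i ∧ i < n ∧ v = stdE n i - stdE n (i + 1)) ∨
       (match t with
        | .B => v = stdE n n
        | .C => v = (2:ℝ) • stdE n n
        | .D => v = stdE n (n - 1) + stdE n n)}

/-- The simple root `α_k` of `B_n` / `C_n` / `D_n` (1-based index `k`). -/
def bcdAlpha (t : BCD) (n k : ℕ) : EuclideanSpace ℝ (Fin n) :=
  if k < n then stdE n k - stdE n (k + 1)
  else match t with
  | .B => stdE n n
  | .C => (2:ℝ) • stdE n n
  | .D => stdE n (n - 1) + stdE n n


set_option linter.unusedSectionVars false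

/-! ### Helper lemmas -/

lemma reflV_apply (α v : V) : reflV α v = v - ⟪v, coroot α⟫ • α := by
  unfold reflV
  split_ifs with h
  · have : α = 0 := inner_self_eq_zero.mp h
    simp [this]
  · rw [Module.reflection_apply]
    rfl

lemma reflV_reflV (α v : V) : reflV α (reflV α v) = v := by
  by_cases h : ⟪α, α⟫ = 0
  · have : α = 0 := inner_self_eq_zero.mp h
    simp [reflV_apply, this]
  · have h2 : ⟪α, coroot α⟫ = 2 := corootForm_self h
    rw [reflV_apply, reflV_apply, inner_sub_left, real_inner_smul_left, h2]
    module

lemma reflV_inv (α : V) : (reflV α)⁻¹ = reflV α := by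
  rw [inv_eq_iff_mul_eq_one]
  ext v
  exact reflV_reflV α v

lemma weyl_induction {X : Set V} {P : (V ≃ₗ[ℝ] V) → Prop} (h1 : P 1)
    (hs : ∀ α ∈ X, ∀ w ∈ weyl X, P w → P (reflV α * w)) : ∀ w ∈ weyl X, P w := by
  intro w hw
  unfold weyl at hw
  induction hw using Subgroup.closure_induction_left with
  | one => exact h1
  | mul_left x hx y hy ih =>
    obtain ⟨α, hα, rfl⟩ := hx
    exact hs α hα y hy ih
  | inv_mul_cancel x hx y hy ih =>
    obtain ⟨α, hα, rfl⟩ := hx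
    rw [reflV_inv]
    exact hs α hα y hy ih

lemma reflV_mem_weyl {X : Set V} {α : V} (h : α ∈ X) : reflV α ∈ weyl X :=
  Subgroup.subset_closure ⟨α, h, rfl⟩

lemma weyl_mono {X Y : Set V} (h : X ⊆ Y) : weyl X ≤ weyl Y :=
  Subgroup.closure_mono fun _ ⟨α, hα, e⟩ => ⟨α, h hα, e⟩

lemma inner_coroot_eq_zero {x α : V} (h : ⟪x, α⟫ = 0) : ⟪x, coroot α⟫ = 0 := by
  simp [coroot, real_inner_smul_right, h]

lemma reflV_fix {x α : V} (h : ⟪x, α⟫ = 0) : reflV α x = x := by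
  rw [reflV_apply, inner_coroot_eq_zero h]; simp

lemma weyl_fix {X : Set V} {x : V} (h : ∀ α ∈ X, ⟪x, α⟫ = 0) : ∀ w ∈ weyl X, w x = x := by
  apply weyl_induction
  · rfl
  · intro α hα w _ ih
    rw [LinearEquiv.mul_apply, ih, reflV_fix (h α hα)]

lemma weyl_sub_mem {X : Set V} {M : Submodule ℝ V} (h : X ⊆ M) (x : V) :
    ∀ w ∈ weyl X, w x - x ∈ M := by
  apply weyl_induction
  · simp
  · intro α hα w _ ih
    rw [LinearEquiv.mul_apply, reflV_apply, sub_right_comm]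
    exact M.sub_mem ih (M.smul_mem _ (h hα))

lemma weyl_inner {X : Set V} (x y : V) : ∀ w ∈ weyl X, ⟪w x, w y⟫ = ⟪x, y⟫ := by
  apply weyl_induction
  · rfl
  · intro α hα w _ ih
    rw [LinearEquiv.mul_apply, LinearEquiv.mul_apply, ← ih, reflV_apply, reflV_apply]
    by_cases h : ⟪α, α⟫ = 0
    · have : α = 0 := inner_self_eq_zero.mp h
      simp [this]
    · simp only [coroot, inner_sub_left, inner_sub_right, real_inner_smul_left,
        real_inner_smul_right, real_inner_comm α]
      field_simp
      ring

lemma weyl_coroot {X : Set V} {w : V ≃ₗ[ℝ] V} (hw : w ∈ weyl X) (α : V) :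
    coroot (w α) = w (coroot α) := by
  simp only [coroot, weyl_inner α α w hw, map_smul]

lemma weyl_mem {X Y : Set V} (h : ∀ α ∈ X, ∀ γ ∈ Y, reflV α γ ∈ Y) :
    ∀ w ∈ weyl X, ∀ γ ∈ Y, w γ ∈ Y := by
  apply weyl_induction
  · intro γ hγ; exact hγ
  · intro α hα w _ ih γ hγ
    exact h α hα _ (ih γ hγ)

lemma coroot_neg (α : V) : coroot (-α) = - coroot α := by
  simp [coroot]

lemma inner_self_pos' {α : V} (h : α ≠ 0) : 0 < ⟪α, α⟫ := real_inner_self_pos.mpr h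

lemma neg_mem (S : RootSys V) {α : V} (h : α ∈ S.Φ) : -α ∈ S.Φ := by
  have := S.refl_mem α h α h
  rw [reflV_apply, show ⟪α, coroot α⟫ = 2 from
    corootForm_self (inner_self_pos' (S.ne_zero α h)).ne'] at this
  convert this using 1
  module

/-- Coordinate functionals of the simple system. -/
lemma exists_coord (S : RootSys V) : ∃ f : V → (V →ₗ[ℝ] ℝ),
    (∀ j ∈ S.Δ, ∀ i ∈ S.Δ, f j i = if i = j then 1 else 0) := by
  have hli : LinearIndepOn ℝ id (S.Δ : Set V) := S.simple_indep
  let b := Module.Basis.extend hli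
  have hsub : ∀ a ∈ S.Δ, a ∈ hli.extend (Set.subset_univ _) :=
    fun a ha => hli.subset_extend (Set.subset_univ _) ha
  refine ⟨fun j => if h : j ∈ S.Δ then b.coord ⟨j, hsub j h⟩ else 0, ?_⟩
  intro j hj i hi
  have e : i = b ⟨i, hsub i hi⟩ := by simp [b]
  simp only [dif_pos hj]
  conv_lhs => rw [e]
  rw [Module.Basis.coord_apply, Module.Basis.repr_self, Finsupp.single_apply]
  simp

/-- The data of coordinates. -/
structure Coord (S : RootSys V) (f : V → (V →ₗ[ℝ] ℝ)) : Prop where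
  eval : ∀ j ∈ S.Δ, ∀ i ∈ S.Δ, f j i = if i = j then 1 else 0

lemma Coord.nonneg {S : RootSys V} {f} (hf : Coord S f) {γ : V} (hγ : γ ∈ S.pos) {j : V}
    (hj : j ∈ S.Δ) : 0 ≤ f j γ := by
  obtain ⟨c, hc, rfl⟩ := S.simple_gen γ hγ
  rw [map_sum, Finset.sum_eq_single j]
  · simp [hf.eval j hj j hj, hc j hj]
  · intro i hi hij
    simp [hf.eval j hj i hi, hij]
  · exact fun h => absurd hj h

lemma Coord.expand {S : RootSys V} {f} (hf : Coord S f) {γ : V} (hγ : γ ∈ S.pos) :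
    γ = ∑ j ∈ S.Δ, f j γ • j := by
  obtain ⟨c, hc, e⟩ := S.simple_gen γ hγ
  conv_lhs => rw [e]
  refine Finset.sum_congr rfl fun j hj => ?_
  congr 1
  rw [e, map_sum, Finset.sum_eq_single j]
  · simp [hf.eval j hj j hj]
  · intro i hi hij
    simp [hf.eval j hj i hi, hij]
  · exact fun h => absurd hj h

lemma Coord.span_zero {S : RootSys V} {f} (hf : Coord S f) {I : Finset V} (hI : I ⊆ S.Δ)
    {x : V} (hx : x ∈ Submodule.span ℝ (I : Set V)) {j : V} (hj : j ∈ S.Δ) (hjI : j ∉ I) :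
    f j x = 0 := by
  have : Submodule.span ℝ (I : Set V) ≤ LinearMap.ker (f j) := by
    rw [Submodule.span_le]
    intro i hi
    have : i ≠ j := by rintro rfl; exact hjI hi
    simp [hf.eval j hj i (hI hi), this]
  exact this hx

lemma Coord.mem_span {S : RootSys V} {f} (hf : Coord S f) {I : Finset V} {γ : V}
    (hγ : γ ∈ S.pos) (h : ∀ j ∈ S.Δ, j ∉ I → f j γ = 0) :
    γ ∈ Submodule.span ℝ (I : Set V) := by
  rw [hf.expand hγ]
  refine Submodule.sum_mem _ fun j hj => ?_
  by_cases hjI : j ∈ I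
  · exact Submodule.smul_mem _ _ (Submodule.subset_span hjI)
  · rw [h j hj hjI]; simp

lemma inner_coroot_pos {x α : V} (hα : α ≠ 0) (h : 0 < ⟪x, α⟫) : 0 < ⟪x, coroot α⟫ := by
  rw [coroot, real_inner_smul_right]
  have := inner_self_pos' hα
  positivity

lemma pos_induct (S : RootSys V) {I : Finset V} (hI : I ⊆ S.Δ) {P : V → Prop}
    (h0 : ∀ i ∈ I, P i)
    (h1 : ∀ i ∈ I, ∀ α ∈ S.pos, 0 < ⟪α, i⟫ → P (reflV i α) → P α) :
    ∀ α ∈ S.pos, α ∈ Submodule.span ℝ (I : Set V) → P α := by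
  obtain ⟨f, hf'⟩ := exists_coord S
  have hf : Coord S f := ⟨hf'⟩
  by_contra hcon
  push Not at hcon
  obtain ⟨α0, a1, a2, a3⟩ := hcon
  let bad := S.pos.filter fun α => α ∈ Submodule.span ℝ (I : Set V) ∧ ¬ P α
  let ht : V →ₗ[ℝ] ℝ := ∑ j ∈ S.Δ, f j
  have hti : ∀ i ∈ S.Δ, ht i = 1 := by
    intro i hi
    simp only [ht, LinearMap.sum_apply]
    rw [Finset.sum_eq_single i]
    · simp [hf.eval i hi i hi]
    · intro j hj hji
      simp [hf.eval j hj i hi, hji.symm]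
    · exact fun h => absurd hi h
  obtain ⟨α, hα, hmin⟩ := bad.exists_min_image ht ⟨α0, by simp [bad, a1, a2, a3]⟩
  simp only [bad, Finset.mem_filter] at hα hmin
  obtain ⟨hpos, hsp, hP⟩ := hα
  have hΦ := S.pos_subset hpos
  have hne := S.ne_zero α hΦ
  -- find i
  have : ∃ i ∈ I, 0 < ⟪α, i⟫ := by
    by_contra hno
    push Not at hno
    have h2 : ⟪α, α⟫ ≤ 0 := by
      have e : ⟪α, α⟫ = ⟪∑ j ∈ S.Δ, f j α • j, α⟫ := by rw [← hf.expand hpos]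
      rw [e, sum_inner]
      refine Finset.sum_nonpos fun j hj => ?_
      rw [real_inner_smul_left]
      by_cases hjI : j ∈ I
      · rw [real_inner_comm]
        exact mul_nonpos_of_nonneg_of_nonpos (hf.nonneg hpos hj) (hno j hjI)
      · rw [hf.span_zero hI hsp hj hjI]; simp
    exact absurd h2 (not_le.mpr (inner_self_pos' hne))
  obtain ⟨i, hi, hip⟩ := this
  have hiΦ := S.pos_subset (S.simple_subset (hI hi))
  have hcp := inner_coroot_pos (S.ne_zero i hiΦ) hip
  have hsΦ := S.refl_mem i hiΦ α hΦ
  have hspos : reflV i α ∈ S.pos := by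
    by_contra hneg
    have hn : -reflV i α ∈ S.pos := (S.mem_pos_or _ hsΦ).resolve_left hneg
    have hz : ∀ j ∈ S.Δ, j ≠ i → f j α = 0 := by
      intro j hj hji
      have p1 := hf.nonneg hpos hj
      have p2 := hf.nonneg hn hj
      rw [reflV_apply] at p2
      simp [hf.eval j hj i (hI hi), hji.symm] at p2
      linarith
    have he : α = f i α • i := by
      conv_lhs => rw [hf.expand hpos]
      rw [Finset.sum_eq_single i]
      · intro j hj hji
        rw [hz j hj hji]; simp
      · exact fun h => absurd (hI hi) h
    have hr := S.reduced i hiΦ (f i α) (he ▸ hΦ)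
    have hnn := hf.nonneg hpos (hI hi)
    rcases hr with hr | hr
    · rw [hr, one_smul] at he
      exact hP (he ▸ h0 i hi)
    · linarith
  apply hP
  refine h1 i hi α hpos hip ?_
  by_contra hnP
  have := hmin (reflV i α) ⟨hspos, ?_, hnP⟩
  · rw [reflV_apply, map_sub, map_smul, hti i (hI hi)] at this
    simp at this
    linarith
  · rw [reflV_apply]
    exact Submodule.sub_mem _ hsp (Submodule.smul_mem _ _ (Submodule.subset_span hi))

lemma pos_span_int (S : RootSys V) {I : Finset V} (hI : I ⊆ S.Δ) :
    ∀ α ∈ S.pos, α ∈ Submodule.span ℝ (I : Set V) → α ∈ PhiI S I := by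
  intro α hα hs
  refine ⟨S.pos_subset hα, ?_⟩
  refine pos_induct S hI (P := fun α => α ∈ Submodule.span ℤ (I : Set V))
    (fun i hi => Submodule.subset_span hi) ?_ α hα hs
  intro i hi α hα _ ih
  obtain ⟨n, hn⟩ := S.crystallographic i (S.pos_subset (S.simple_subset (hI hi))) α
    (S.pos_subset hα)
  rw [reflV_apply, hn] at ih
  have : α = (α - (n : ℝ) • i) + n • i := by
    rw [Int.cast_smul_eq_zsmul]; abel
  rw [this]
  exact Submodule.add_mem _ ih (Submodule.smul_mem _ _ (Submodule.subset_span hi))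

lemma PhiI_span (S : RootSys V) {I : Finset V} {α : V} (h : α ∈ PhiI S I) :
    α ∈ Submodule.span ℝ (I : Set V) :=
  Submodule.span_subset_span ℤ ℝ _ h.2

lemma PhiI_neg (S : RootSys V) {I : Finset V} {α : V} (h : α ∈ PhiI S I) :
    -α ∈ PhiI S I := ⟨neg_mem S h.1, Submodule.neg_mem _ h.2⟩

lemma PhiI_refl (S : RootSys V) {I : Finset V} :
    ∀ α ∈ PhiI S I, ∀ γ ∈ PhiI S I, reflV α γ ∈ PhiI S I := by
  intro α hα γ hγ
  refine ⟨S.refl_mem α hα.1 γ hγ.1, ?_⟩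
  obtain ⟨n, hn⟩ := S.crystallographic α hα.1 γ hγ.1
  rw [reflV_apply, hn, Int.cast_smul_eq_zsmul]
  exact Submodule.sub_mem _ hγ.2 (Submodule.smul_mem _ _ hα.2)

lemma dominant (S : RootSys V) {I : Finset V} (hI : I ⊆ S.Δ) {mu : HStar V}
    (hmu : mu ∈ LambdaP (I : Set V)) :
    ∀ α ∈ PhiI S I, α ∈ S.pos → IsPosInt (mu (coroot α)) := by
  intro α hA hα
  refine pos_induct S hI (P := fun α => IsPosInt (mu (coroot α))) hmu ?_ α hα (PhiI_span S hA)
  intro i hi α hα hip ih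
  have hiΦ := S.pos_subset (S.simple_subset (hI hi))
  have hαΦ := S.pos_subset hα
  obtain ⟨n, hn⟩ := S.crystallographic α hαΦ i hiΦ
  have hnp : 0 < n := by
    have := inner_coroot_pos (S.ne_zero α hαΦ) ((real_inner_comm i α).symm ▸ hip)
    rw [hn] at this
    exact_mod_cast this
  have hc : coroot α = coroot (reflV i α) + (n : ℝ) • coroot i := by
    rw [weyl_coroot (X := {i}) (reflV_mem_weyl rfl), reflV_apply, ← hn]
    have e : ⟪coroot α, coroot i⟫ • i = ⟪i, coroot α⟫ • coroot i := by
      simp only [coroot, real_inner_smul_left, real_inner_smul_right, smul_smul,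
        real_inner_comm i α]
      congr 1
      ring
    rw [e]; abel
  obtain ⟨m, hm, em⟩ := ih
  obtain ⟨k, hk, ek⟩ := hmu i hi
  refine ⟨m + n * k, by positivity, ?_⟩
  rw [hc, map_add, map_smul, em, ek]
  simp

lemma IsPosInt.neg_absurd {z : ℂ} (h : IsPosInt z) (h' : IsPosInt (-z)) : False := by
  obtain ⟨n, hn, rfl⟩ := h
  obtain ⟨m, hm, e⟩ := h'
  have : -n = m := by exact_mod_cast e
  omega

lemma IsPosInt.ne_zero {z : ℂ} (h : IsPosInt z) : z ≠ 0 := by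
  obtain ⟨n, hn, rfl⟩ := h
  exact_mod_cast hn.ne'

lemma coroot_ne {l : HStar V} {α : V} (h : l (coroot α) ≠ 0) : l α ≠ 0 := by
  intro h0
  apply h
  simp [coroot, h0]

lemma dominant_ne (S : RootSys V) {I : Finset V} (hI : I ⊆ S.Δ) {mu : HStar V}
    (hmu : mu ∈ LambdaP (I : Set V)) {α : V} (hA : α ∈ PhiI S I) : mu α ≠ 0 := by
  rcases S.mem_pos_or α hA.1 with h | h
  · exact coroot_ne (dominant S hI hmu α hA h).ne_zero
  · have := coroot_ne (dominant S hI hmu _ (PhiI_neg S hA) h).ne_zero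
    simpa using this

lemma len_zero (S : RootSys V) {I : Finset V} (hI : I ⊆ S.Δ) {m1 m2 : HStar V}
    (h1 : m1 ∈ LambdaP (I : Set V)) (h2 : m2 ∈ LambdaP (I : Set V)) {u : V ≃ₗ[ℝ] V}
    (hu : u ∈ weyl (PhiI S I)) (he : ∀ v, m2 (u v) = m1 v) : ∀ γ ∈ S.pos, u γ ∈ S.pos := by
  intro γ hγ
  by_contra hneg
  have huΦ : u γ ∈ S.Φ := weyl_mem (Y := (S.Φ : Set V))
    (fun α hα γ hγ => S.refl_mem α hα.1 γ hγ) u hu γ (S.pos_subset hγ)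
  have hn := (S.mem_pos_or _ huΦ).resolve_left hneg
  have hA : γ ∈ PhiI S I := by
    apply pos_span_int S hI γ hγ
    obtain ⟨f, hf'⟩ := exists_coord S
    have hf : Coord S f := ⟨hf'⟩
    apply hf.mem_span hγ
    intro j hj hjI
    have hd : u γ - γ ∈ Submodule.span ℝ (I : Set V) :=
      weyl_sub_mem (fun α hα => PhiI_span S hα) γ u hu
    have := hf.span_zero hI hd hj hjI
    have p1 := hf.nonneg hγ hj
    have p2 := hf.nonneg hn hj
    rw [map_sub] at this
    rw [map_neg] at p2
    linarith
  have huA := weyl_mem (PhiI_refl S) u hu γ hA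
  have q1 := dominant S hI h1 γ hA hγ
  have q2 := dominant S hI h2 _ (PhiI_neg S huA) hn
  rw [coroot_neg, weyl_coroot hu, map_neg, he] at q2
  exact q1.neg_absurd q2

lemma len_eq (S : RootSys V) {I : Finset V} (hI : I ⊆ S.Δ) {m1 m2 : HStar V}
    (h1 : m1 ∈ LambdaP (I : Set V)) (h2 : m2 ∈ LambdaP (I : Set V)) {u w : V ≃ₗ[ℝ] V}
    (hu : u ∈ weyl (PhiI S I)) (hw : w ∈ weyl (PhiI S I)) (he : ∀ v, m2 (u v) = m1 v) :
    len S (u * w) = len S w := by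
  have hp := len_zero S hI h1 h2 hu he
  unfold len
  congr 1
  ext γ
  simp only [Set.mem_ofPred_eq, LinearEquiv.mul_apply]
  refine and_congr_right fun hγ => not_congr ?_
  refine ⟨fun h => ?_, fun h => hp _ h⟩
  by_contra hneg
  have hΦ : w γ ∈ S.Φ := weyl_mem (Y := (S.Φ : Set V))
    (fun α hα γ hγ => S.refl_mem α hα.1 γ hγ) w hw γ (S.pos_subset hγ)
  have := hp _ ((S.mem_pos_or _ hΦ).resolve_left hneg)
  rw [map_neg] at this
  exact S.not_both _ h this

lemma component_orth (S : RootSys V) {β a c : V} (ha : a ∈ S.Φ) (haC : a ∉ component S β)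
    (hc : c ∈ component S β) : ⟪a, c⟫ = 0 := by
  by_contra h
  apply haC
  refine ⟨ha, hc.2.tail ⟨hc.1, ha, ?_⟩⟩
  rwa [real_inner_comm]

/-- The orthogonal component setting. -/
structure Comp (S : RootSys V) (C : Set V) : Prop where
  sub : C ⊆ (S.Φ : Set V)
  orth : ∀ a ∈ S.Φ, a ∉ C → ∀ c ∈ C, ⟪a, c⟫ = 0

lemma Comp.perp {S : RootSys V} {C : Set V} (hC : Comp S C) {a : V} (ha : a ∈ S.Φ)
    (haC : a ∉ C) : a ∈ (Submodule.span ℝ C)ᗮ := by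
  rw [Submodule.mem_orthogonal']
  intro u hu
  induction hu using Submodule.span_induction with
  | mem x hx => exact hC.orth a ha haC x hx
  | zero => simp
  | add x y _ _ hx hy => simp [inner_add_right, hx, hy]
  | smul c x _ hx => simp [inner_smul_right, hx]

lemma coroot_mem {M : Submodule ℝ V} {a : V} (h : a ∈ M) : coroot a ∈ M := M.smul_mem _ h

lemma perp_inner {C : Set V} {u x : V} (hu : u ∈ Submodule.span ℝ C)
    (hx : x ∈ (Submodule.span ℝ C)ᗮ) : ⟪u, x⟫ = 0 := (Submodule.mem_orthogonal _ _).mp hx u hu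

lemma perp_inner' {C : Set V} {u x : V} (hu : u ∈ Submodule.span ℝ C)
    (hx : x ∈ (Submodule.span ℝ C)ᗮ) : ⟪x, u⟫ = 0 := (Submodule.mem_orthogonal' _ _).mp hx u hu

lemma split_ext {l m : HStar V} (U : Submodule ℝ V) (h1 : ∀ x ∈ U, l x = m x)
    (h2 : ∀ x ∈ Uᗮ, l x = m x) : l = m := by
  ext v
  obtain ⟨y, hy, z, hz, rfl⟩ := U.exists_add_mem_mem_orthogonal v
  rw [map_add, map_add, h1 y hy, h2 z hz]

lemma emb_apply (a v : V) : emb a v = ((⟪a, v⟫ : ℝ) : ℂ) := rfl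

lemma emb_span {C : Set V} {u : V} (hu : u ∈ Submodule.span ℝ C) :
    emb u ∈ Submodule.span ℂ (emb '' C) := by
  induction hu using Submodule.span_induction with
  | mem x hx => exact Submodule.subset_span ⟨x, hx, rfl⟩
  | zero =>
    have : emb (0 : V) = 0 := by ext v; simp [emb_apply]
    rw [this]; exact Submodule.zero_mem _
  | add x y _ _ hx hy =>
    have : emb (x + y) = emb x + emb y := by ext v; simp [emb_apply, inner_add_left]
    rw [this]; exact Submodule.add_mem _ hx hy
  | smul c x _ hx =>
    have : emb (c • x) = (c : ℂ) • emb x := by ext v; simp [emb_apply, real_inner_smul_left]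
    rw [this]; exact Submodule.smul_mem _ _ hx

lemma restrict_spec (C : Set V) (l : HStar V) :
    restrictW C l ∈ Submodule.span ℂ (emb '' C) ∧
      ∀ α ∈ C, restrictW C l (coroot α) = l (coroot α) := by
  unfold restrictW
  refine Classical.epsilon_spec (p := fun m : HStar V => m ∈ Submodule.span ℂ (emb '' C) ∧
    ∀ α ∈ C, m (coroot α) = l (coroot α)) ?_
  let U := Submodule.span ℝ C
  let b := stdOrthonormalBasis ℝ U
  refine ⟨∑ i, l (b i : V) • emb (b i : V), ?_, ?_⟩
  · exact Submodule.sum_mem _ fun i _ => Submodule.smul_mem _ _ (emb_span (b i).2)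
  · intro α hα
    have hm : coroot α ∈ U := coroot_mem (Submodule.subset_span hα)
    have e := b.sum_repr' ⟨coroot α, hm⟩
    have e2 := congrArg (fun x : U => l (x : V)) e
    simp only [Submodule.coe_sum, Submodule.coe_smul, map_sum, map_smul, Submodule.coe_inner] at e2
    rw [← e2, LinearMap.sum_apply]
    refine Finset.sum_congr rfl fun i _ => ?_
    simp [emb_apply, mul_comm]

lemma restrict_on {S : RootSys V} {C : Set V} (hC : Comp S C) (l : HStar V) {x : V}
    (hx : x ∈ Submodule.span ℝ C) : restrictW C l x = l x := by
  induction hx using Submodule.span_induction with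
  | mem a ha =>
    have h := (restrict_spec C l).2 a ha
    have hp := inner_self_pos' (S.ne_zero a (hC.sub ha))
    simp only [coroot, map_smul] at h
    have hc : (2 / ⟪a, a⟫ : ℝ) ≠ 0 := by positivity
    exact smul_right_injective ℂ hc h
  | zero => simp
  | add x y _ _ hx hy => simp [hx, hy]
  | smul c x _ hx => simp [hx]

lemma span_emb_perp {C : Set V} {m : HStar V} (hm : m ∈ Submodule.span ℂ (emb '' C)) {x : V}
    (hx : x ∈ (Submodule.span ℝ C)ᗮ) : m x = 0 := by
  induction hm using Submodule.span_induction with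
  | mem a ha =>
    obtain ⟨a, ha, rfl⟩ := ha
    rw [emb_apply, perp_inner (Submodule.subset_span ha) hx]; simp
  | zero => simp
  | add x y _ _ hx hy => simp [hx, hy]
  | smul c x _ hx => simp [hx]

lemma restrict_perp {C : Set V} (l : HStar V) {x : V}
    (hx : x ∈ (Submodule.span ℝ C)ᗮ) : restrictW C l x = 0 :=
  span_emb_perp (restrict_spec C l).1 hx

lemma sRefl_apply (b : V) (l : HStar V) (x : V) :
    sRefl b l x = l x - l (coroot b) * ((⟪b, x⟫ : ℝ) : ℂ) := rfl

lemma wAct_apply (w : V ≃ₗ[ℝ] V) (l : HStar V) (x : V) : wAct w l x = l (w⁻¹ x) := rfl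

lemma sRefl_on {S : RootSys V} {C : Set V} (hC : Comp S C) (l : HStar V) {b x : V} (hb : b ∈ C)
    (hx : x ∈ Submodule.span ℝ C) : sRefl b (restrictW C l) x = sRefl b l x := by
  rw [sRefl_apply, sRefl_apply, restrict_on hC l hx, (restrict_spec C l).2 b hb]

lemma sRefl_perp {C : Set V} (l : HStar V) {b x : V} (hb : b ∈ C)
    (hx : x ∈ (Submodule.span ℝ C)ᗮ) : sRefl b l x = l x := by
  rw [sRefl_apply, perp_inner (Submodule.subset_span hb) hx]; simp

section split
variable {S : RootSys V} {C A : Set V}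

lemma refl_U (hC : Comp S C) {a x : V} (ha : a ∈ S.Φ) (hx : x ∈ Submodule.span ℝ C) :
    reflV a x ∈ Submodule.span ℝ C := by
  by_cases haC : a ∈ C
  · rw [reflV_apply]
    exact Submodule.sub_mem _ hx (Submodule.smul_mem _ _ (Submodule.subset_span haC))
  · rwa [reflV_fix (perp_inner hx (hC.perp ha haC))]

lemma weyl_U (hC : Comp S C) (hA : A ⊆ (S.Φ : Set V)) {w : V ≃ₗ[ℝ] V} (hw : w ∈ weyl A) {x : V}
    (hx : x ∈ Submodule.span ℝ C) : w x ∈ Submodule.span ℝ C :=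
  weyl_mem (Y := (Submodule.span ℝ C : Set V)) (fun _ hα _ hγ => refl_U hC (hA hα) hγ) w hw x hx

lemma weyl_perp (hC : Comp S C) (hA : A ⊆ (S.Φ : Set V)) {w : V ≃ₗ[ℝ] V} (hw : w ∈ weyl A)
    {x : V} (hx : x ∈ (Submodule.span ℝ C)ᗮ) : w x ∈ (Submodule.span ℝ C)ᗮ := by
  rw [Submodule.mem_orthogonal]
  intro u hu
  have h1 := weyl_U hC hA (inv_mem hw) hu
  have h2 := weyl_inner (w⁻¹ u) x w hw
  rw [perp_inner h1 hx] at h2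
  rwa [← LinearEquiv.mul_apply, mul_inv_cancel] at h2

lemma weyl_C_fix {w : V ≃ₗ[ℝ] V} (hw : w ∈ weyl (A ∩ C)) {x : V}
    (hx : x ∈ (Submodule.span ℝ C)ᗮ) : w x = x :=
  weyl_fix (fun _ hα => perp_inner' (Submodule.subset_span hα.2) hx) w hw

lemma decomp (hC : Comp S C) (hA : A ⊆ (S.Φ : Set V)) : ∀ w ∈ weyl A, ∃ w' ∈ weyl (A ∩ C),
    ∀ x ∈ Submodule.span ℝ C, w x = w' x := by
  apply weyl_induction
  · exact ⟨1, one_mem _, fun _ _ => rfl⟩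
  · rintro α hα w hw ⟨w', hw', h⟩
    by_cases hαC : α ∈ C
    · refine ⟨reflV α * w', mul_mem (reflV_mem_weyl ⟨hα, hαC⟩) hw', fun x hx => ?_⟩
      rw [LinearEquiv.mul_apply, LinearEquiv.mul_apply, h x hx]
    · refine ⟨w', hw', fun x hx => ?_⟩
      rw [LinearEquiv.mul_apply, reflV_fix, h x hx]
      exact perp_inner (weyl_U hC hA hw hx) (hC.perp (hA hα) hαC)

lemma restrict_eq_iff (hC : Comp S C) (hA : A ⊆ (S.Φ : Set V)) {lam mu : HStar V} {b : V}
    (hb : b ∈ C) {w : V ≃ₗ[ℝ] V} (hw : w ∈ weyl (A ∩ C)) :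
    restrictW C mu = wAct w (sRefl b (restrictW C lam)) ↔
      ∀ x ∈ Submodule.span ℝ C, mu x = sRefl b lam (w⁻¹ x) := by
  have hAC : A ∩ C ⊆ (S.Φ : Set V) := Set.inter_subset_left.trans hA
  constructor
  · intro h x hx
    have := congrArg (fun l : HStar V => l x) h
    simp only [wAct_apply] at this
    rwa [restrict_on hC mu hx, sRefl_on hC lam hb (weyl_U hC hAC (inv_mem hw) hx)] at this
  · intro h
    apply split_ext (Submodule.span ℝ C)
    · intro x hx
      rw [wAct_apply, restrict_on hC mu hx,
        sRefl_on hC lam hb (weyl_U hC hAC (inv_mem hw) hx), h x hx]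
    · intro x hx
      rw [wAct_apply, weyl_C_fix (inv_mem hw) hx, sRefl_perp _ hb hx, restrict_perp _ hx,
        restrict_perp _ hx]

lemma forward (hC : Comp S C) (hA : A ⊆ (S.Φ : Set V)) {lam mu : HStar V} {b : V}
    (hb : b ∈ C) (h : ∃ w, w ∈ weyl A ∧ mu = wAct w (sRefl b lam)) :
    ∃ w, w ∈ weyl (A ∩ C) ∧ restrictW C mu = wAct w (sRefl b (restrictW C lam)) := by
  obtain ⟨w, hw, rfl⟩ := h
  obtain ⟨w1, hw1, h1⟩ := decomp hC hA w⁻¹ (inv_mem hw)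
  refine ⟨w1⁻¹, inv_mem hw1, (restrict_eq_iff hC hA hb (inv_mem hw1)).mpr fun x hx => ?_⟩
  rw [wAct_apply, h1 x hx, inv_inv]

lemma backward (hC : Comp S C) (hA : A ⊆ (S.Φ : Set V)) {lam mu : HStar V} {β b : V}
    (hβ : β ∈ C) (hb : b ∈ C) (h0 : ∃ w, w ∈ weyl A ∧ mu = wAct w (sRefl β lam))
    (h : ∃ w, w ∈ weyl (A ∩ C) ∧ restrictW C mu = wAct w (sRefl b (restrictW C lam))) :
    ∃ w, w ∈ weyl A ∧ mu = wAct w (sRefl b lam) := by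
  obtain ⟨w0, hw0, e0⟩ := h0
  obtain ⟨w', hw', e'⟩ := h
  rw [restrict_eq_iff hC hA hb hw'] at e'
  obtain ⟨w1, hw1, h1⟩ := decomp hC hA w0⁻¹ (inv_mem hw0)
  have hle : weyl (A ∩ C) ≤ weyl A := weyl_mono Set.inter_subset_left
  refine ⟨w0 * w1 * w', mul_mem (mul_mem hw0 (hle hw1)) (hle hw'), ?_⟩
  apply split_ext (Submodule.span ℝ C)
  · intro x hx
    rw [e' x hx, wAct_apply, mul_inv_rev, mul_inv_rev, LinearEquiv.mul_apply,
      LinearEquiv.mul_apply, h1 x hx, ← LinearEquiv.mul_apply w1⁻¹, inv_mul_cancel]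
    rfl
  · intro x hx
    have hx2 := weyl_perp hC hA (inv_mem hw0) hx
    rw [e0, wAct_apply, wAct_apply, mul_inv_rev, mul_inv_rev, LinearEquiv.mul_apply,
      LinearEquiv.mul_apply, weyl_C_fix (inv_mem hw1) hx2, weyl_C_fix (inv_mem hw') hx2,
      sRefl_perp _ hβ hx2, sRefl_perp _ hb hx2]

end split

lemma sgn_ne_iff (S : RootSys V) (A : Set V) (l m : HStar V) : sgnW S A l m ≠ 0 ↔
    (IsRegularOn A l ∧ IsRegularOn A m ∧ ∃ w, w ∈ weyl A ∧ m = wAct w l) := by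
  unfold sgnW
  split_ifs with h
  · simp [h]
  · simp [h]

section main
variable {S : RootSys V} {C : Set V} {I : Finset V}

lemma PhiI_sub : PhiI S I ⊆ (S.Φ : Set V) := fun _ h => h.1

lemma I_mem (hI : I ⊆ S.Δ) {i : V} (hi : i ∈ I) : i ∈ PhiI S I :=
  ⟨S.pos_subset (S.simple_subset (hI hi)), Submodule.subset_span hi⟩

lemma lift_dom (hI : I ⊆ S.Δ) (hC : Comp S C) {lam : HStar V} (hlam : lam ∈ LambdaP (I : Set V))
    {b : V} (hb : b ∈ C) {w : V ≃ₗ[ℝ] V} (hw : w ∈ weyl (PhiI S I ∩ C))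
    (h : ∀ i ∈ I, i ∈ C → IsPosInt (wAct w (sRefl b lam) (coroot i))) :
    wAct w (sRefl b lam) ∈ LambdaP (I : Set V) := by
  intro i hi
  by_cases hiC : i ∈ C
  · exact h i hi hiC
  · have hp := coroot_mem (hC.perp (I_mem hI hi).1 hiC)
    rw [wAct_apply, weyl_C_fix (inv_mem hw) hp, sRefl_perp _ hb hp]
    exact hlam i hi

lemma regular_iff (hI : I ⊆ S.Δ) (hC : Comp S C) {lam : HStar V}
    (hlam : lam ∈ LambdaP (I : Set V)) {b : V} (hb : b ∈ C) :
    IsRegularOn (PhiI S I) (sRefl b lam) ↔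
      IsRegularOn (PhiI S I ∩ C) (sRefl b (restrictW C lam)) := by
  constructor
  · intro h α hα
    rw [sRefl_on hC lam hb (Submodule.subset_span hα.2)]
    exact h α hα.1
  · intro h α hα
    by_cases hαC : α ∈ C
    · rw [← sRefl_on hC lam hb (Submodule.subset_span hαC)]
      exact h α ⟨hα, hαC⟩
    · rw [sRefl_perp _ hb (hC.perp hα.1 hαC)]
      exact dominant_ne S hI hlam hα

lemma restrict_regular (hI : I ⊆ S.Δ) (hC : Comp S C) {mu : HStar V}
    (hmu : mu ∈ LambdaP (I : Set V)) : IsRegularOn (PhiI S I ∩ C) (restrictW C mu) := by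
  intro α hα
  rw [restrict_on hC mu (Submodule.subset_span hα.2)]
  exact dominant_ne S hI hmu hα.1

lemma restrict_dom (hI : I ⊆ S.Δ) {mu : HStar V}
    (hmu : mu ∈ LambdaP (I : Set V)) : restrictW C mu ∈ LambdaPSub S (PhiI S I ∩ C) C := by
  refine ⟨(restrict_spec C mu).1, fun α hα => ?_⟩
  rw [(restrict_spec C mu).2 α hα.1.2]
  exact dominant S hI hmu α hα.1.1 hα.2

lemma len_match (hI : I ⊆ S.Δ) (hC : Comp S C) {lam mu : HStar V}
    (hlam : lam ∈ LambdaP (I : Set V)) (hmu : mu ∈ LambdaP (I : Set V)) {b : V} (hb : b ∈ C)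
    {w w' : V ≃ₗ[ℝ] V} (hw : w ∈ weyl (PhiI S I)) (e : mu = wAct w (sRefl b lam))
    (hw' : w' ∈ weyl (PhiI S I ∩ C))
    (e' : restrictW C mu = wAct w' (sRefl b (restrictW C lam))) : len S w = len S w' := by
  rw [restrict_eq_iff hC PhiI_sub hb hw'] at e'
  have hm1 : wAct w' (sRefl b lam) ∈ LambdaP (I : Set V) := by
    apply lift_dom hI hC hlam hb hw'
    intro i hi hiC
    rw [wAct_apply, ← e' _ (coroot_mem (Submodule.subset_span hiC))]
    exact hmu i hi
  have hw'A : w' ∈ weyl (PhiI S I) := weyl_mono Set.inter_subset_left hw'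
  have := len_eq S hI hm1 hmu (u := w * w'⁻¹) (w := w') (mul_mem hw (inv_mem hw'A)) hw'A ?_
  · rwa [inv_mul_cancel_right] at this
  · intro v
    rw [e, wAct_apply, wAct_apply, LinearEquiv.mul_apply, ← LinearEquiv.mul_apply w⁻¹,
      inv_mul_cancel]
    rfl

lemma sgn_match (hI : I ⊆ S.Δ) (hC : Comp S C) {lam mu : HStar V}
    (hlam : lam ∈ LambdaP (I : Set V)) (hmu : mu ∈ LambdaP (I : Set V)) {β b : V} (hβ : β ∈ C)
    (hb : b ∈ C) (h0 : ∃ w, w ∈ weyl (PhiI S I) ∧ mu = wAct w (sRefl β lam)) :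
    sgnW S (PhiI S I) (sRefl b lam) mu =
      sgnW S (PhiI S I ∩ C) (sRefl b (restrictW C lam)) (restrictW C mu) := by
  have hiff : (IsRegularOn (PhiI S I) (sRefl b lam) ∧ IsRegularOn (PhiI S I) mu ∧
      ∃ w, w ∈ weyl (PhiI S I) ∧ mu = wAct w (sRefl b lam)) ↔
      (IsRegularOn (PhiI S I ∩ C) (sRefl b (restrictW C lam)) ∧
        IsRegularOn (PhiI S I ∩ C) (restrictW C mu) ∧
      ∃ w, w ∈ weyl (PhiI S I ∩ C) ∧
        restrictW C mu = wAct w (sRefl b (restrictW C lam))) := by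
    constructor
    · rintro ⟨h1, h2, h3⟩
      exact ⟨(regular_iff hI hC hlam hb).mp h1, restrict_regular hI hC hmu,
        forward hC PhiI_sub hb h3⟩
    · rintro ⟨h1, h2, h3⟩
      exact ⟨(regular_iff hI hC hlam hb).mpr h1, fun α hα => dominant_ne S hI hmu hα,
        backward hC PhiI_sub hβ hb h0 h3⟩
  by_cases h : (IsRegularOn (PhiI S I) (sRefl b lam) ∧ IsRegularOn (PhiI S I) mu ∧
      ∃ w, w ∈ weyl (PhiI S I) ∧ mu = wAct w (sRefl b lam))
  · have h' := hiff.mp h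
    unfold sgnW
    rw [dif_pos h, dif_pos h',
      len_match hI hC hlam hmu hb h.2.2.choose_spec.1 h.2.2.choose_spec.2
        h'.2.2.choose_spec.1 h'.2.2.choose_spec.2]
  · have h' := fun x => h (hiff.mpr x)
    unfold sgnW
    rw [dif_neg h, dif_neg h']

lemma sgn_off (hI : I ⊆ S.Δ) (hC : Comp S C) {lam mu : HStar V} {β b : V} (hβ : β ∈ C)
    (hβ' : β ∈ PsiP S (PhiI S I) (S.Φ : Set V) lam)
    (hb : b ∉ C) (hbΦ : b ∈ S.Φ) (h0 : ∃ w, w ∈ weyl (PhiI S I) ∧ mu = wAct w (sRefl β lam)) :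
    sgnW S (PhiI S I) (sRefl b lam) mu = 0 := by
  by_contra hne
  obtain ⟨-, -, w, hw, e⟩ := (sgn_ne_iff _ _ _ _).mp hne
  obtain ⟨w0, hw0, e0⟩ := h0
  obtain ⟨⟨_, hpos⟩, hnot, hposint⟩ := hβ'
  let M := Submodule.span ℝ (I : Set V)
  have hβM : β ∉ M := fun h => hnot (pos_span_int S hI β hpos h)
  obtain ⟨y, hy, z, hz, hyz⟩ := M.exists_add_mem_mem_orthogonal β
  obtain ⟨x, hx, t, ht, hxt⟩ := (Submodule.span ℝ C).exists_add_mem_mem_orthogonal z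
  have hβU : β ∈ Submodule.span ℝ C := Submodule.subset_span hβ
  have hβx : ⟪β, x⟫ ≠ 0 := by
    have h1 : ⟪β, x⟫ = ⟪β, z⟫ := by
      rw [hxt, inner_add_right, perp_inner hβU ht, add_zero]
    have h2 : ⟪β, z⟫ = ⟪z, z⟫ := by
      conv_lhs => rw [hyz]
      rw [inner_add_left, perp_inner hy hz, zero_add]
    rw [h1, h2]
    intro h3
    have : z = 0 := inner_self_eq_zero.mp h3
    rw [this, add_zero] at hyz
    exact hβM (hyz ▸ hy)
  have hxI : ∀ i ∈ I, ⟪i, x⟫ = 0 := by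
    intro i hi
    by_cases hiC : i ∈ C
    · have h1 : ⟪i, z⟫ = 0 := perp_inner (Submodule.subset_span hi) hz
      rwa [hxt, inner_add_right, perp_inner (Submodule.subset_span hiC) ht, add_zero] at h1
    · exact perp_inner' hx (hC.perp (I_mem hI hi).1 hiC)
  have hxA : ∀ α ∈ PhiI S I, ⟪x, α⟫ = 0 := by
    intro α hα
    have : x ∈ Mᗮ := by
      rw [Submodule.mem_orthogonal]
      intro u hu
      induction hu using Submodule.span_induction with
      | mem i hi => exact hxI i hi
      | zero => simp
      | add p q _ _ hp hq => simp [inner_add_left, hp, hq]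
      | smul c p _ hp => simp [inner_smul_left, hp]
    exact perp_inner' (PhiI_span S hα) this
  have q1 : mu x = lam x := by
    rw [e, wAct_apply, weyl_fix hxA _ (inv_mem hw), sRefl_apply,
      perp_inner' hx (hC.perp hbΦ hb)]
    simp
  have q2 : mu x = lam x - lam (coroot β) * ((⟪β, x⟫ : ℝ) : ℂ) := by
    rw [e0, wAct_apply, weyl_fix hxA _ (inv_mem hw0), sRefl_apply]
  rw [q1] at q2
  have q3 : lam (coroot β) * ((⟪β, x⟫ : ℝ) : ℂ) = 0 := by linear_combination q2
  rcases mul_eq_zero.mp q3 with h | h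
  · exact hposint.ne_zero h
  · exact hβx (by exact_mod_cast h)

lemma jc_match (hI : I ⊆ S.Δ) (hC : Comp S C) {lam mu : HStar V}
    (hlam : lam ∈ LambdaP (I : Set V)) (hmu : mu ∈ LambdaP (I : Set V)) {β : V} (hβ : β ∈ C)
    (hβ' : β ∈ PsiP S (PhiI S I) (S.Φ : Set V) lam)
    (h0 : ∃ w, w ∈ weyl (PhiI S I) ∧ mu = wAct w (sRefl β lam)) :
    jc S (PhiI S I) (S.Φ : Set V) lam mu =
      jc S (PhiI S I ∩ C) C (restrictW C lam) (restrictW C mu) := by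
  unfold jc
  rw [finsum_mem_def, finsum_mem_def]
  refine finsum_congr fun b => ?_
  by_cases hb : b ∈ C
  · have hmem : b ∈ PsiPP S (PhiI S I) (S.Φ : Set V) lam ↔
        b ∈ PsiPP S (PhiI S I ∩ C) C (restrictW C lam) := by
      have hr := regular_iff hI hC hlam hb
      have hbΦ := hC.sub hb
      have hc := (restrict_spec C lam).2 b hb
      constructor
      · rintro ⟨⟨⟨_, h2⟩, h3, h4⟩, h5⟩
        exact ⟨⟨⟨hb, h2⟩, fun h => h3 h.1, hc ▸ h4⟩, hr.mp h5⟩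
      · rintro ⟨⟨⟨_, h2⟩, h3, h4⟩, h5⟩
        exact ⟨⟨⟨hbΦ, h2⟩, fun h => h3 ⟨h, hb⟩, hc ▸ h4⟩, hr.mpr h5⟩
    simp only [Set.indicator_apply, hmem, sgn_match hI hC hlam hmu hβ hb h0]
  · have hn : b ∉ PsiPP S (PhiI S I ∩ C) C (restrictW C lam) := fun h => hb h.1.1.1
    rw [Set.indicator_of_notMem hn, Set.indicator_apply]
    split_ifs with h
    · exact sgn_off hI hC hβ hβ' hb h.1.1.1 h0
    · rfl

end main

/-- Lemma 4.7 (Irreducible invariance): for `λ ∈ Λ_I⁺` and `β ∈ Ψ_λ⁺`, there is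
`μ ∈ Λ_I⁺` with `sgn(s_β λ, μ) ≠ 0` iff there is
`μ' ∈ Λ⁺(Φ_I ∩ Φ_{β,0}, Φ_{β,0})` with
`sgn(s_β (λ|_{Φ_{β,0}}), μ', Φ_I ∩ Φ_{β,0}, Φ_{β,0}) ≠ 0`; and if `sgn(s_β λ, μ) ≠ 0`
then `μ' = μ|_{Φ_{β,0}}` works and
`c(λ, μ) = c(λ|_{Φ_{β,0}}, μ|_{Φ_{β,0}}, Φ_I ∩ Φ_{β,0}, Φ_{β,0})`. -/
theorem statement_6 {V : Type*} [NormedAddCommGroup V] [InnerProductSpace ℝ V]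
    [FiniteDimensional ℝ V]
    (S : RootSys V) (I : Finset V) (hI : I ⊆ S.Δ)
    (lam : HStar V) (hlam : lam ∈ LambdaP (I : Set V))
    (β : V) (hβ : β ∈ PsiP S (PhiI S I) (S.Φ : Set V) lam) :
    ((∃ mu ∈ LambdaP (I : Set V), sgnW S (PhiI S I) (sRefl β lam) mu ≠ 0) ↔
      (∃ mu' ∈ LambdaPSub S (PhiI S I ∩ component S β) (component S β),
        sgnW S (PhiI S I ∩ component S β)
          (sRefl β (restrictW (component S β) lam)) mu' ≠ 0)) ∧
    (∀ mu ∈ LambdaP (I : Set V), sgnW S (PhiI S I) (sRefl β lam) mu ≠ 0 →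
      restrictW (component S β) mu ∈
        LambdaPSub S (PhiI S I ∩ component S β) (component S β) ∧
      sgnW S (PhiI S I ∩ component S β) (sRefl β (restrictW (component S β) lam))
        (restrictW (component S β) mu) ≠ 0 ∧
      jc S (PhiI S I) (S.Φ : Set V) lam mu =
        jc S (PhiI S I ∩ component S β) (component S β)
          (restrictW (component S β) lam) (restrictW (component S β) mu)) := by
  have hC : Comp S (component S β) :=
    ⟨fun _ h => h.1, fun a ha haC c hc => component_orth S ha haC hc⟩
  have hβC : β ∈ component S β := ⟨hβ.1.1, Relation.ReflTransGen.refl⟩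
  have key : ∀ mu ∈ LambdaP (I : Set V), sgnW S (PhiI S I) (sRefl β lam) mu ≠ 0 →
      restrictW (component S β) mu ∈
        LambdaPSub S (PhiI S I ∩ component S β) (component S β) ∧
      sgnW S (PhiI S I ∩ component S β) (sRefl β (restrictW (component S β) lam))
        (restrictW (component S β) mu) ≠ 0 ∧
      jc S (PhiI S I) (S.Φ : Set V) lam mu =
        jc S (PhiI S I ∩ component S β) (component S β)
          (restrictW (component S β) lam) (restrictW (component S β) mu) := by
    intro mu hmu hne
    have h := (sgn_ne_iff _ _ _ _).mp hne
    refine ⟨restrict_dom hI hmu, ?_, jc_match hI hC hlam hmu hβC hβ h.2.2⟩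
    rwa [← sgn_match hI hC hlam hmu hβC hβC h.2.2]
  refine ⟨⟨?_, ?_⟩, key⟩
  · rintro ⟨mu, hmu, hne⟩
    exact ⟨_, (key mu hmu hne).1, (key mu hmu hne).2.1⟩
  · rintro ⟨mu', hmu', hne⟩
    obtain ⟨h1, h2, w, hw, rfl⟩ := (sgn_ne_iff _ _ _ _).mp hne
    have hAC : PhiI S I ∩ component S β ⊆ (S.Φ : Set V) := fun _ h => h.1.1
    have hdom : wAct w (sRefl β lam) ∈ LambdaP (I : Set V) := by
      apply lift_dom hI hC hlam hβC hw
      intro i hi hiC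
      have := hmu'.2 i ⟨⟨I_mem hI hi, hiC⟩, S.simple_subset (hI hi)⟩
      rwa [wAct_apply, sRefl_on hC lam hβC (weyl_U hC hAC (inv_mem hw)
        (coroot_mem (Submodule.subset_span hiC)))] at this
    refine ⟨_, hdom, (sgn_ne_iff _ _ _ _).mpr ⟨(regular_iff hI hC hlam hβC).mpr h1,
      fun α hα => dominant_ne S hI hdom hα, w, weyl_mono Set.inter_subset_left hw, rfl⟩⟩

end JantzenGVM
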